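/- arXiv:1207.6365 — 2 statements merged into one kernel-verified Lean document; each statement's English description precedes it below -/
import Mathlib

section
/- (Per-vector concentration for sparse embeddings.) There is an absolute constant K_y such that the following holds. Fix any hash function h : [n] → [t] for which the events E_h and E_B both hold, and let W = T·log(t/δ_h) + r/t. For ε > 0 and δ_y ∈ (0, 1/2], if W ≤ K_y·ε²/log(1/δ_y), then for any fixed unit vector y ∈ C(A), with probability at least 1 − δ_y over the random signs D, ‖ΦD y‖₂ = (1 ± ε)‖y‖₂. -/
/-!
Write `y = U x`. Orthonormality of the columns gives `‖x‖ = ‖y‖ = 1`, so `y i ^ 2 ≤ lev U i`, and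
`E_h` bounds the squared mass of the light coordinates (`s ≤ i`) of `y` in each bucket by `W`.

The heart is the moment generating function bound, valid for real `c` of *either sign* with
`|c| W ≤ 1/8`: the average over signs of `exp (c ‖ΦDy‖²)` is at most `exp (c + 8 c² W)`.
The light signs are integrated out one at a time. Averaging the sign of `y i` in
`exp (m (ρ ± y i)²)` gives, since `cosh x ≤ exp (x²/2)`, at most `exp (m y i² + (m + 2 m² y i²) ρ²)`:
the coefficient `m` of the bucket grows a little, and `y i²` is added deterministically.
Starting with `m = c`, after the light set `Λ` has been integrated out it is at most
`c + 8 c² (mass of Λ in the bucket)`. The potential `pot` records this bound;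
`sum_exp_pot_le_insert` says that its exponential average increases with `Λ`.
Once no light sign remains, each bucket contains at most one heavy coordinate by `E_B`,
so the square of its sum does not depend on the signs.

A Chernoff bound with `c = ± min ε 1 / (16 V)`, `V = K ε² / log (1/δ)`, then controls
`|‖ΦDy‖² - 1|` at level `ε max(1, ε)`, which is what a deviation of `‖ΦDy‖` by `ε` forces;
with `K = 1/64` each tail has probability at most `δ² ≤ δ/2`.
-/


open Matrix Finset Real

noncomputable section

/-- `±1` sign value of a Boolean. -/
def sgn (b : Bool) : ℝ := if b then 1 else -1

/-- The sparse embedding matrix `ΦD` determined by a hash function `h : [n] → [t]`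
and random signs `σ`. -/
def SE {n t : ℕ} (h : Fin n → Fin t) (σ : Fin n → Bool) :
    Matrix (Fin t) (Fin n) ℝ :=
  fun a j => (if h j = a then (1 : ℝ) else 0) * sgn (σ j)

/-- Squared Euclidean norm. -/
def sqnorm {ι : Type*} [Fintype ι] (y : ι → ℝ) : ℝ := ∑ i, y i ^ 2

/-- Leverage scores: squared Euclidean norms of the rows of `U`. -/
def lev {n r : ℕ} (U : Matrix (Fin n) (Fin r) ℝ) (i : Fin n) : ℝ := ∑ k, U i k ^ 2

/-- The sum of the signed coordinates of `y` in bucket `j`, leaving out the indices in `Λ`. -/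
def rem {n t : ℕ} (h : Fin n → Fin t) (y : Fin n → ℝ) (Λ : Finset (Fin n))
    (σ : Fin n → Bool) (j : Fin t) : ℝ :=
  ∑ i ∈ Λᶜ, if h i = j then sgn (σ i) * y i else 0

/-- The squared mass of the coordinates of `y` in bucket `j` with index in `Λ`. -/
def mass {n t : ℕ} (h : Fin n → Fin t) (y : Fin n → ℝ) (Λ : Finset (Fin n)) (j : Fin t) : ℝ :=
  ∑ i ∈ Λ, if h i = j then y i ^ 2 else 0

/-- The exponent left once the signs in `Λ` have been integrated out of `exp (c ‖ΦDy‖²)`. -/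
def pot {n t : ℕ} (h : Fin n → Fin t) (y : Fin n → ℝ) (c : ℝ) (Λ : Finset (Fin n))
    (σ : Fin n → Bool) : ℝ :=
  ∑ j, (c + 8 * c ^ 2 * mass h y Λ j) * (rem h y Λ σ j ^ 2 + mass h y Λ j)

lemma sgn_sq (b : Bool) : sgn b ^ 2 = 1 := by cases b <;> simp [sgn]

lemma sgn_not (b : Bool) : sgn (!b) = - sgn b := by cases b <;> simp [sgn]

lemma mass_nonneg {n t : ℕ} (h : Fin n → Fin t) (y : Fin n → ℝ) (Λ : Finset (Fin n))
    (j : Fin t) : 0 ≤ mass h y Λ j := by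
  unfold mass
  exact Finset.sum_nonneg fun i _ => by split_ifs <;> positivity

lemma mass_mono {n t : ℕ} (h : Fin n → Fin t) (y : Fin n → ℝ) {Λ Γ : Finset (Fin n)}
    (hs : Λ ⊆ Γ) (j : Fin t) : mass h y Λ j ≤ mass h y Γ j := by
  unfold mass
  exact Finset.sum_le_sum_of_subset_of_nonneg hs fun i _ _ => by split_ifs <;> positivity

lemma mass_insert {n t : ℕ} (h : Fin n → Fin t) (y : Fin n → ℝ) {Λ : Finset (Fin n)}
    {i : Fin n} (hi : i ∉ Λ) (j : Fin t) :
    mass h y (insert i Λ) j = mass h y Λ j + if h i = j then y i ^ 2 else 0 := by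
  unfold mass
  rw [Finset.sum_insert hi, add_comm]

lemma rem_insert {n t : ℕ} (h : Fin n → Fin t) (y : Fin n → ℝ) {Λ : Finset (Fin n)}
    {i : Fin n} (hi : i ∉ Λ) (σ : Fin n → Bool) (j : Fin t) :
    rem h y Λ σ j = rem h y (insert i Λ) σ j + if h i = j then sgn (σ i) * y i else 0 := by
  unfold rem
  rw [Finset.compl_insert, Finset.sum_erase_add _ _ (by simpa using hi)]

/-- `rem` does not see the signs in the set it leaves out. -/
lemma rem_update {n t : ℕ} (h : Fin n → Fin t) (y : Fin n → ℝ) {Λ : Finset (Fin n)}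
    {i : Fin n} (hi : i ∈ Λ) (σ : Fin n → Bool) (b : Bool) (j : Fin t) :
    rem h y Λ (Function.update σ i b) j = rem h y Λ σ j := by
  unfold rem
  refine Finset.sum_congr rfl fun k hk => ?_
  have : k ≠ i := by rintro rfl; exact (Finset.mem_compl.1 hk) hi
  rw [Function.update_of_ne this]

lemma exp_add_exp_le (x p q : ℝ) (hq : p + x ^ 2 / 2 ≤ q) :
    Real.exp (p + x) + Real.exp (p - x) ≤ 2 * Real.exp q := by
  have h1 := Real.cosh_le_exp_half_sq x
  rw [Real.cosh_eq] at h1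
  calc Real.exp (p + x) + Real.exp (p - x)
      = 2 * (Real.exp p * ((Real.exp x + Real.exp (-x)) / 2)) := by
        rw [sub_eq_add_neg, Real.exp_add, Real.exp_add]; ring
    _ ≤ 2 * (Real.exp p * Real.exp (x ^ 2 / 2)) := by gcongr
    _ = 2 * Real.exp (p + x ^ 2 / 2) := by rw [Real.exp_add]
    _ ≤ 2 * Real.exp q := by gcongr

/-- The change of the bucket coefficient `c + 8 c² v` when a coordinate `z` is absorbed pays for
the variance term produced by averaging over the sign of `z`. -/
lemma coeff_step (c v z ρ : ℝ) (hv : 0 ≤ v) (hc : |c| * (v + z ^ 2) ≤ 1 / 8) :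
    (c + 8 * c ^ 2 * v) * (ρ ^ 2 + z ^ 2 + v) + (2 * (c + 8 * c ^ 2 * v) * ρ * z) ^ 2 / 2 ≤
      (c + 8 * c ^ 2 * (v + z ^ 2)) * (ρ ^ 2 + (v + z ^ 2)) := by
  have h1 : |c| * v ≤ 1 / 8 := by nlinarith [abs_nonneg c, sq_nonneg z]
  have h2 : |c + 8 * c ^ 2 * v| ≤ 2 * |c| := by
    calc |c + 8 * c ^ 2 * v| ≤ |c| + |8 * c ^ 2 * v| := abs_add_le _ _
      _ = |c| + 8 * |c| * (|c| * v) := by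
        rw [abs_of_nonneg (by positivity : 0 ≤ 8 * c ^ 2 * v), ← sq_abs c]; ring
      _ ≤ 2 * |c| := by nlinarith [abs_nonneg c]
  have h3 : (c + 8 * c ^ 2 * v) ^ 2 ≤ 4 * c ^ 2 := by
    have := pow_le_pow_left₀ (abs_nonneg _) h2 2
    rw [mul_pow, sq_abs, sq_abs] at this
    linarith
  have h4 : (c + 8 * c ^ 2 * v) ^ 2 * (ρ ^ 2 * z ^ 2) ≤ 4 * c ^ 2 * (ρ ^ 2 * z ^ 2) := by gcongr
  have h5 : 0 ≤ 8 * c ^ 2 * z ^ 2 * (v + z ^ 2) := by positivity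
  nlinarith

/-- Integrating out one more sign: pair each `σ` with its flip at `i`. -/
lemma sum_exp_pot_le_insert {n t : ℕ} (h : Fin n → Fin t) (y : Fin n → ℝ) (c : ℝ)
    {Λ : Finset (Fin n)} {i : Fin n} (hi : i ∉ Λ)
    (hc : |c| * mass h y (insert i Λ) (h i) ≤ 1 / 8) :
    ∑ σ, Real.exp (pot h y c Λ σ) ≤ ∑ σ, Real.exp (pot h y c (insert i Λ) σ) := by
  have hinv : Function.Involutive
      (fun σ : Fin n → Bool => Function.update σ i (!(σ i))) := by
    intro σ
    simp
  have hflip : ∑ σ, Real.exp (pot h y c Λ (Function.update σ i (!(σ i)))) =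
      ∑ σ, Real.exp (pot h y c Λ σ) :=
    Equiv.sum_comp (hinv.toPerm _) (fun σ => Real.exp (pot h y c Λ σ))
  have key : ∀ σ : Fin n → Bool, Real.exp (pot h y c Λ σ) +
      Real.exp (pot h y c Λ (Function.update σ i (!(σ i)))) ≤
        2 * Real.exp (pot h y c (insert i Λ) σ) := by
    intro σ
    set R := rem h y (insert i Λ) σ with hR
    set m := mass h y Λ with hm
    set C := ∑ j ∈ univ.erase (h i), (c + 8 * c ^ 2 * m j) * (R j ^ 2 + m j) with hC
    set μ := c + 8 * c ^ 2 * m (h i) with hμ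
    have split : ∀ f : Fin t → ℝ, ∑ j, f j = (∑ j ∈ univ.erase (h i), f j) + f (h i) :=
      fun f => (Finset.sum_erase_add _ _ (Finset.mem_univ _)).symm
    have e1 : pot h y c Λ σ = (C + μ * (R (h i) ^ 2 + y i ^ 2 + m (h i))) +
        2 * μ * R (h i) * (sgn (σ i) * y i) := by
      unfold pot
      rw [split, rem_insert h y hi, if_pos rfl]
      have : ∀ j ∈ univ.erase (h i), (c + 8 * c ^ 2 * mass h y Λ j) *
          (rem h y Λ σ j ^ 2 + mass h y Λ j) = (c + 8 * c ^ 2 * m j) * (R j ^ 2 + m j) := by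
        intro j hj
        rw [rem_insert h y hi, if_neg (Finset.ne_of_mem_erase hj).symm, add_zero]
      rw [Finset.sum_congr rfl this]
      linear_combination μ * y i ^ 2 * sgn_sq (σ i)
    have e2 : pot h y c Λ (Function.update σ i (!(σ i))) =
        (C + μ * (R (h i) ^ 2 + y i ^ 2 + m (h i))) -
        2 * μ * R (h i) * (sgn (σ i) * y i) := by
      unfold pot
      rw [split, rem_insert h y hi, if_pos rfl, rem_update h y (Finset.mem_insert_self i Λ),
        Function.update_self, sgn_not]
      have : ∀ j ∈ univ.erase (h i), (c + 8 * c ^ 2 * mass h y Λ j) *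
          (rem h y Λ (Function.update σ i (!(σ i))) j ^ 2 + mass h y Λ j) =
          (c + 8 * c ^ 2 * m j) * (R j ^ 2 + m j) := by
        intro j hj
        rw [rem_insert h y hi, if_neg (Finset.ne_of_mem_erase hj).symm, add_zero,
          rem_update h y (Finset.mem_insert_self i Λ)]
      rw [Finset.sum_congr rfl this]
      linear_combination μ * y i ^ 2 * sgn_sq (σ i)
    have e3 : pot h y c (insert i Λ) σ =
        C + (c + 8 * c ^ 2 * (m (h i) + y i ^ 2)) * (R (h i) ^ 2 + (m (h i) + y i ^ 2)) := by
      unfold pot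
      rw [split, mass_insert h y hi, if_pos rfl]
      congr 1
      refine Finset.sum_congr rfl fun j hj => ?_
      rw [mass_insert h y hi, if_neg (Finset.ne_of_mem_erase hj).symm, add_zero]
    rw [e1, e2, e3]
    apply exp_add_exp_le
    rw [mass_insert h y hi, if_pos rfl] at hc
    have := coeff_step c (m (h i)) (y i) (R (h i)) (mass_nonneg h y Λ (h i)) hc
    have e4 : (2 * μ * R (h i) * (sgn (σ i) * y i)) ^ 2 / 2 =
        (2 * (c + 8 * c ^ 2 * m (h i)) * R (h i) * y i) ^ 2 / 2 := by
      linear_combination (2 * μ ^ 2 * R (h i) ^ 2 * y i ^ 2) * sgn_sq (σ i)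
    rw [e4]
    linarith
  have := Finset.sum_le_sum fun σ (_ : σ ∈ univ) => key σ
  rw [Finset.sum_add_distrib, hflip, ← Finset.mul_sum] at this
  linarith

lemma sum_exp_pot_le {n t : ℕ} (h : Fin n → Fin t) (y : Fin n → ℝ) (c : ℝ)
    (Λ : Finset (Fin n)) (hc : ∀ j, |c| * mass h y Λ j ≤ 1 / 8) :
    ∑ σ, Real.exp (pot h y c ∅ σ) ≤ ∑ σ, Real.exp (pot h y c Λ σ) := by
  induction Λ using Finset.induction_on with
  | empty => exact le_rfl
  | insert i Λ hi ih =>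
    refine (ih fun j => ?_).trans (sum_exp_pot_le_insert h y c hi (hc _))
    exact (mul_le_mul_of_nonneg_left (mass_mono h y (Finset.subset_insert i Λ) j)
      (abs_nonneg c)).trans (hc j)

lemma pot_empty {n t : ℕ} (h : Fin n → Fin t) (y : Fin n → ℝ) (c : ℝ) (σ : Fin n → Bool) :
    pot h y c ∅ σ = c * sqnorm ((SE h σ).mulVec y) := by
  unfold pot sqnorm
  rw [Finset.mul_sum]
  refine Finset.sum_congr rfl fun j _ => ?_
  have : (SE h σ).mulVec y j = rem h y ∅ σ j := by
    simp [rem, Matrix.mulVec, dotProduct, SE]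
  rw [this]
  simp [mass]

/-- If `h` is injective off `Λ`, each bucket sum off `Λ` has at most one term, so its square
does not depend on the signs. -/
lemma rem_sq {n t : ℕ} (h : Fin n → Fin t) (y : Fin n → ℝ) (Λ : Finset (Fin n))
    (hinj : Set.InjOn h {i | i ∉ Λ}) (σ : Fin n → Bool) (j : Fin t) :
    rem h y Λ σ j ^ 2 = mass h y Λᶜ j := by
  unfold rem mass
  by_cases hex : ∃ i, i ∉ Λ ∧ h i = j
  · obtain ⟨i, hi, rfl⟩ := hex
    have hne : ∀ k ∈ Λᶜ, k ≠ i → h k ≠ h i := fun k hk hki he =>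
      hki (hinj (Finset.mem_compl.1 hk) hi he)
    rw [Finset.sum_eq_single_of_mem i (by simpa using hi) fun k hk hki => if_neg (hne k hk hki),
      Finset.sum_eq_single_of_mem i (by simpa using hi) fun k hk hki => if_neg (hne k hk hki)]
    simp [mul_pow, sgn_sq]
  · push Not at hex
    rw [Finset.sum_eq_zero fun k hk => if_neg (hex k (Finset.mem_compl.1 hk)),
      Finset.sum_eq_zero fun k hk => if_neg (hex k (Finset.mem_compl.1 hk))]
    simp

/-- The moment generating function bound, for both signs of `c`. -/
lemma mgf_bound {n t : ℕ} (h : Fin n → Fin t) (y : Fin n → ℝ) (c V : ℝ)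
    (Λ : Finset (Fin n)) (hinj : Set.InjOn h {i | i ∉ Λ})
    (hV : ∀ j, mass h y Λ j ≤ V) (hc : |c| * V ≤ 1 / 8) (hy : sqnorm y = 1) :
    ∑ σ, Real.exp (c * sqnorm ((SE h σ).mulVec y)) ≤
      Fintype.card (Fin n → Bool) * Real.exp (c + 8 * c ^ 2 * V) := by
  simp_rw [← pot_empty]
  refine (sum_exp_pot_le h y c Λ fun j =>
    (mul_le_mul_of_nonneg_left (hV j) (abs_nonneg c)).trans hc).trans ?_
  rw [← nsmul_eq_mul, ← Finset.card_univ]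
  refine Finset.sum_le_card_nsmul _ _ _ fun σ _ => Real.exp_le_exp.2 ?_
  have htot : ∑ j, (rem h y Λ σ j ^ 2 + mass h y Λ j) = 1 := by
    rw [← hy, sqnorm]
    simp_rw [rem_sq h y Λ hinj, mass, Finset.sum_compl_add_sum]
    rw [Finset.sum_comm]
    simp
  calc pot h y c Λ σ
      ≤ ∑ j, (c + 8 * c ^ 2 * V) * (rem h y Λ σ j ^ 2 + mass h y Λ j) := by
        unfold pot
        gcongr with j
        · have := mass_nonneg h y Λ j
          positivity
        · exact hV j
    _ = c + 8 * c ^ 2 * V := by rw [← Finset.mul_sum, htot, mul_one]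

/-- The coordinates of a unit vector in the column space are bounded by the leverage scores. -/
lemma sq_le_lev {n r : ℕ} (U : Matrix (Fin n) (Fin r) ℝ) (hU : Uᵀ * U = 1)
    (x : Fin r → ℝ) (hy : sqnorm (U.mulVec x) = 1) (i : Fin n) :
    U.mulVec x i ^ 2 ≤ lev U i := by
  have h1 : sqnorm x = 1 := by
    rw [← hy]
    have : ∀ {ι : Type} [Fintype ι] (z : ι → ℝ), sqnorm z = z ⬝ᵥ z := fun z => by
      simp [sqnorm, dotProduct, sq]
    rw [this, this, Matrix.dotProduct_mulVec, Matrix.vecMul_mulVec, hU, Matrix.vecMul_one]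
  have h2 := Finset.sum_mul_sq_le_sq_mul_sq univ (U i) x
  rw [show ∑ k, x k ^ 2 = 1 from h1, mul_one] at h2
  exact h2

/-- A deviation of `√Z` from `1` by more than `ε` forces a deviation of `Z` from `1` by
`ε max(1, ε)`; below `1` it can only happen when `ε < 1`. -/
lemma dev_sq {Z ε : ℝ} (hZ : 0 ≤ Z) (hε : 0 < ε) (hd : ε < |√Z - 1|) :
    ε * max 1 ε ≤ |Z - 1| := by
  have hs := Real.sqrt_nonneg Z
  have hq := Real.sq_sqrt hZ
  rcases lt_abs.1 hd with h1 | h1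
  · refine le_trans ?_ (le_abs_self _)
    rcases le_total 1 ε with h2 | h2
    · rw [max_eq_right h2]; nlinarith
    · rw [max_eq_left h2]; nlinarith
  · refine le_trans ?_ (neg_le_abs _)
    rw [max_eq_left (by linarith)]
    nlinarith

/-- **Per-vector concentration for sparse embeddings.** There is an absolute
constant `K_y` such that, for a hash function `h` on which the events `E_h` and
`E_B` hold, if `W ≤ K_y·ε²/log(1/δ_y)` with `δ_y ∈ (0, 1/2]`, then for any fixed
unit vector `y ∈ C(A)`, with probability at least `1 − δ_y` over the random signs,
`‖ΦDy‖₂ = (1 ± ε)‖y‖₂`. -/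
theorem per_vector_concentration :
    ∃ Ky : ℝ, 0 < Ky ∧
    ∀ (n d r t : ℕ) (A : Matrix (Fin n) (Fin d) ℝ) (U : Matrix (Fin n) (Fin r) ℝ),
      A.rank = r → Uᵀ * U = 1 →
      (∀ y : Fin n → ℝ, y ∈ Set.range A.mulVec ↔ y ∈ Set.range U.mulVec) →
      (∀ i j : Fin n, i ≤ j → lev U j ≤ lev U i) →
    ∀ (δh T : ℝ), 0 < δh → 0 < T →
    ∀ s : ℕ,
      (∀ i : Fin n, (i : ℕ) < s → T < lev U i) →
      (∀ i : Fin n, s ≤ (i : ℕ) → lev U i ≤ T) →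
    ∀ W : ℝ, W = T * Real.log (t / δh) + r / t →
    ∀ h : Fin n → Fin t,
      (∀ j : Fin t,
        (∑ i : Fin n,
          Set.indicator {i : Fin n | s ≤ (i : ℕ) ∧ h i = j} (lev U) i) ≤ W) →
      Set.InjOn h {i : Fin n | (i : ℕ) < s} →
    ∀ (ε δy : ℝ), 0 < ε → 0 < δy → δy ≤ 1 / 2 →
      W ≤ Ky * ε ^ 2 / Real.log (1 / δy) →
    ∀ y : Fin n → ℝ, y ∈ Set.range A.mulVec → sqnorm y = 1 →
    (1 - δy) * (Fintype.card (Fin n → Bool)) ≤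
      Nat.card {σ : Fin n → Bool //
        |Real.sqrt (sqnorm ((SE h σ).mulVec y)) - Real.sqrt (sqnorm y)| ≤
          ε * Real.sqrt (sqnorm y)} := by
  refine ⟨1 / 64, by norm_num, ?_⟩
  intro n d r t A U _ hU hrange _ δh T _ _ s _ _ W _ h hEh hEB ε δy hε hδ hδ2 hW y hyA hy
  obtain ⟨x, rfl⟩ := (hrange y).1 hyA
  set y := U.mulVec x with hydef
  rw [hy, Real.sqrt_one, mul_one]
  set Λ : Finset (Fin n) := univ.filter fun i => s ≤ (i : ℕ) with hΛ
  have hinj : Set.InjOn h {i | i ∉ Λ} := by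
    refine hEB.mono fun i hi => ?_
    simpa [hΛ] using hi
  have hmass : ∀ j, mass h y Λ j ≤ W := by
    intro j
    refine le_trans ?_ (hEh j)
    rw [mass, hΛ, Finset.sum_filter]
    refine Finset.sum_le_sum fun i _ => ?_
    simp only [Set.indicator_apply, Set.mem_ofPred_eq, ite_and]
    split_ifs
    · exact sq_le_lev U hU x hy i
    · exact le_rfl
    · exact le_rfl
  set L := Real.log (1 / δy) with hL
  have hLpos : 0 < L := Real.log_pos (by rw [lt_div_iff₀ hδ]; linarith)
  set V := 1 / 64 * ε ^ 2 / L with hV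
  have hVpos : 0 < V := by positivity
  have hVL : ε ^ 2 = 64 * V * L := by rw [hV]; field_simp
  have hmV : ∀ j, mass h y Λ j ≤ V := fun j => (hmass j).trans hW
  set c := min ε 1 / (16 * V) with hc
  have hmin : 0 < min ε 1 := lt_min hε one_pos
  have hcpos : 0 < c := by positivity
  have hcV : c * V = min ε 1 / 16 := by rw [hc]; field_simp
  have hcV8 : |c| * V ≤ 1 / 8 := by
    rw [abs_of_pos hcpos, hcV]; linarith [min_le_right ε 1]
  set τ := ε * max 1 ε with hτ
  -- Chernoff exponent: `c τ = ε² / (16 V) = 4 L` and `8 c² V ≤ ε² / (32 V) = 2 L`.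
  have hcτ : c * τ = 4 * L := by
    have hmm : min ε 1 * max 1 ε = ε := by rw [max_comm, min_mul_max, mul_one]
    have : c * τ = ε * (min ε 1 * max 1 ε) / (16 * V) := by rw [hc, hτ]; ring
    rw [this, hmm, ← sq, hVL]; field_simp; norm_num
  have hc2 : 8 * c ^ 2 * V ≤ 2 * L := by
    have h1 : 8 * c ^ 2 * V = min ε 1 ^ 2 / (32 * V) := by rw [hc]; field_simp; norm_num
    rw [h1, div_le_iff₀ (by positivity)]
    have : min ε 1 ^ 2 ≤ ε ^ 2 := by gcongr; exact min_le_left _ _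
    linarith
  have hexp : Real.exp (-(2 * L)) = δy ^ 2 := by
    rw [hL, one_div, Real.log_inv, show -(2 * -Real.log δy) = Real.log δy + Real.log δy by ring,
      Real.exp_add, Real.exp_log hδ, sq]
  set N : ℝ := ((Fintype.card (Fin n → Bool) : ℕ) : ℝ) with hN
  have hN0 : 0 ≤ N := by positivity
  set Z : (Fin n → Bool) → ℝ := fun σ => sqnorm ((SE h σ).mulVec y) with hZ
  have hZ0 : ∀ σ, 0 ≤ Z σ := fun σ => Finset.sum_nonneg fun i _ => sq_nonneg _
  have tail : ∀ a : ℝ, |a| = c → ∑ σ, Real.exp (a * (Z σ - 1) - c * τ) ≤ N * δy ^ 2 := by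
    intro a ha
    have h1 := mgf_bound h y a V Λ hinj hmV (by rwa [ha, ← abs_of_pos hcpos]) hy
    have h2 : ∀ σ, Real.exp (a * (Z σ - 1) - c * τ) =
        Real.exp (-a - c * τ) * Real.exp (a * Z σ) := fun σ => by
      rw [← Real.exp_add]; congr 1; ring
    have ha2 : a ^ 2 = c ^ 2 := by rw [← ha, sq_abs]
    simp_rw [h2]
    rw [← Finset.mul_sum]
    calc _ ≤ Real.exp (-a - c * τ) * (N * Real.exp (a + 8 * a ^ 2 * V)) := by gcongr
      _ = N * Real.exp (8 * c ^ 2 * V - c * τ) := by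
        rw [mul_left_comm, ← Real.exp_add, ha2]; congr 2; ring
      _ ≤ N * Real.exp (-(2 * L)) := by gcongr; linarith
      _ = N * δy ^ 2 := by rw [hexp]
  have hpt : ∀ σ, (1 : ℝ) - (if |√(Z σ) - 1| ≤ ε then 1 else 0) ≤
      Real.exp (c * (Z σ - 1) - c * τ) + Real.exp (-c * (Z σ - 1) - c * τ) := by
    intro σ
    split_ifs with hg
    · rw [sub_self]; positivity
    · have h1 := dev_sq (hZ0 σ) hε (not_le.1 hg)
      rcases le_abs.1 h1 with h2 | h2
      · have : 1 ≤ Real.exp (c * (Z σ - 1) - c * τ) := Real.one_le_exp (by nlinarith)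
        have := Real.exp_pos (-c * (Z σ - 1) - c * τ)
        linarith
      · have : 1 ≤ Real.exp (-c * (Z σ - 1) - c * τ) := Real.one_le_exp (by nlinarith)
        have := Real.exp_pos (c * (Z σ - 1) - c * τ)
        linarith
  have hsum := Finset.sum_le_sum fun σ (_ : σ ∈ univ) => hpt σ
  rw [Finset.sum_sub_distrib, Finset.sum_add_distrib, Finset.sum_const, Finset.card_univ,
    nsmul_eq_mul, mul_one, Finset.sum_boole] at hsum
  have t1 := tail c (abs_of_pos hcpos)
  have t2 := tail (-c) (by rw [abs_neg, abs_of_pos hcpos])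
  rw [Nat.card_eq_fintype_card, Fintype.card_subtype]
  have hfin : N * (2 * δy ^ 2) ≤ N * δy := by gcongr; nlinarith
  have goal : (1 - δy) * N ≤ ((univ.filter fun σ => |√(Z σ) - 1| ≤ ε).card : ℝ) := by
    linarith
  exact goal
end
end

section
/- (Sparse embeddings preserve the Frobenius norm of a fixed matrix.) Let A ∈ ℝ^{n×d} and let S ∈ ℝ^{t×n} be a random sparse embedding matrix. Then E[‖SA‖_F²] = ‖A‖_F² and Var[‖SA‖_F²] ≤ (6/t)·‖A‖_F⁴. Consequently there is an absolute constant c > 0 such that for any ε ∈ (0,1), if t ≥ c·ε^{−2}, then with probability at least 9/10, ‖SA‖_F² = (1 ± ε)·‖A‖_F². -/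
/-!
Write `F = ‖A‖_F²` and `G = A Aᵀ`. Expanding the square of each entry of `SA` gives
`‖SA‖_F² = ∑ i, ∑ j, 1[h i = h j] σ_i σ_j G i j`, whose diagonal part is exactly `F`. Hence the
deviation `‖SA‖_F² - F` is the linear combination `∑ p, W p * G p` of the signed collision
indicators (`signedCollision`) `W (i, j) = 1[i ≠ j, h i = h j] σ_i σ_j` (`frobSq_SE_mul_sub`).

Flipping the sign `σ_r` is a measure-preserving involution which negates `W p` when `r ∈ p` and fixes
it otherwise. So `E[W p] = 0`, and `E[W p * W q] = 0` unless `p` and `q` are the same unordered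
pair, in which case it is the collision probability `1/t` (`mul_sum_signedCollision_mul`). It follows that the
variance is `(2/t) ∑_{i ≠ j} (G i j)²`, and Cauchy–Schwarz, `(G i j)² ≤ ‖A_i‖² ‖A_j‖²`, bounds it by
`(2/t) F²`. The concentration statement is Chebyshev's inequality, with `c = 60`.
-/

open Matrix Finset Real

noncomputable section

/-- Squared Frobenius norm. -/
def frobSq {m p : ℕ} (M : Matrix (Fin m) (Fin p) ℝ) : ℝ := ∑ i, ∑ j, M i j ^ 2


/-- The sample space: a hash function together with a sign vector. -/
abbrev SEOutcome (n t : ℕ) := (Fin n → Fin t) × (Fin n → Bool)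

/-- The signed indicator of a collision between the two distinct indices of `p`; it is zero when
`p` lies on the diagonal. -/
def signedCollision {n t : ℕ} (ω : SEOutcome n t) (p : Fin n × Fin n) : ℝ :=
  if p.1 ≠ p.2 ∧ ω.1 p.1 = ω.1 p.2 then sgn (ω.2 p.1) * sgn (ω.2 p.2) else 0

/-- The entries of the Gram matrix `A Aᵀ` of the rows of `A`. -/
def rowGram {n d : ℕ} (A : Matrix (Fin n) (Fin d) ℝ) (p : Fin n × Fin n) : ℝ :=
  ∑ k, A p.1 k * A p.2 k

lemma sgn_mul_self (b : Bool) : sgn b * sgn b = 1 := by cases b <;> simp [sgn]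

lemma frobSq_SE_mul {n d t : ℕ} (A : Matrix (Fin n) (Fin d) ℝ) (ω : SEOutcome n t) :
    frobSq (SE ω.1 ω.2 * A) =
      ∑ i, ∑ j, (if ω.1 i = ω.1 j then sgn (ω.2 i) * sgn (ω.2 j) else 0) * rowGram A (i, j) := by
  have key : ∀ i j, (if ω.1 i = ω.1 j then sgn (ω.2 i) * sgn (ω.2 j) else 0) * rowGram A (i, j)
      = ∑ k, ∑ a, (SE ω.1 ω.2 a i * A i k) * (SE ω.1 ω.2 a j * A j k) := by
    intro i j
    rw [rowGram, Finset.mul_sum]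
    refine Finset.sum_congr rfl fun k _ => ?_
    rw [Finset.sum_eq_single (ω.1 i)]
    · by_cases h : ω.1 i = ω.1 j
      · simp only [SE, h, if_true]; ring
      · simp [SE, h, Ne.symm h]
    · intro a _ ha
      simp [SE, Ne.symm ha]
    · simp
  simp_rw [key]
  simp only [frobSq, Matrix.mul_apply, sq, Finset.sum_mul_sum]
  calc _ = ∑ a, ∑ i, ∑ k, ∑ j, (SE ω.1 ω.2 a i * A i k) * (SE ω.1 ω.2 a j * A j k) :=
        Finset.sum_congr rfl fun a _ => Finset.sum_comm
    _ = ∑ a, ∑ i, ∑ j, ∑ k, (SE ω.1 ω.2 a i * A i k) * (SE ω.1 ω.2 a j * A j k) :=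
        Finset.sum_congr rfl fun a _ => Finset.sum_congr rfl fun i _ => Finset.sum_comm
    _ = ∑ i, ∑ a, ∑ j, ∑ k, (SE ω.1 ω.2 a i * A i k) * (SE ω.1 ω.2 a j * A j k) :=
        Finset.sum_comm
    _ = ∑ i, ∑ j, ∑ a, ∑ k, (SE ω.1 ω.2 a i * A i k) * (SE ω.1 ω.2 a j * A j k) :=
        Finset.sum_congr rfl fun i _ => Finset.sum_comm
    _ = _ := Finset.sum_congr rfl fun i _ => Finset.sum_congr rfl fun j _ => Finset.sum_comm

lemma frobSq_eq_sum_rowGram {n d : ℕ} (A : Matrix (Fin n) (Fin d) ℝ) :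
    frobSq A = ∑ i, rowGram A (i, i) := by
  simp [frobSq, rowGram, sq]

/-- The diagonal terms of the expansion of `‖SA‖_F²` are deterministic, so the deviation from
`‖A‖_F²` only involves collisions of distinct indices. -/
lemma frobSq_SE_mul_sub {n d t : ℕ} (A : Matrix (Fin n) (Fin d) ℝ) (ω : SEOutcome n t) :
    frobSq (SE ω.1 ω.2 * A) - frobSq A = ∑ p, signedCollision ω p * rowGram A p := by
  rw [frobSq_SE_mul, frobSq_eq_sum_rowGram, Fintype.sum_prod_type, ← Finset.sum_sub_distrib]
  refine Finset.sum_congr rfl fun i _ => ?_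
  have : rowGram A (i, i) = ∑ j, if i = j then rowGram A (i, j) else 0 := by simp
  rw [this, ← Finset.sum_sub_distrib]
  refine Finset.sum_congr rfl fun j _ => ?_
  by_cases hij : i = j
  · subst hij; simp [signedCollision, sgn_mul_self]
  · simp [signedCollision, hij]

/-- Flipping the sign at the index `r`, as a permutation of the sample space. -/
def flipSign {n t : ℕ} (r : Fin n) : Equiv.Perm (SEOutcome n t) :=
  Function.Involutive.toPerm (fun ω => (ω.1, Function.update ω.2 r (!ω.2 r))) (by
    intro ω
    simp)

lemma flipSign_apply {n t : ℕ} (r : Fin n) (ω : SEOutcome n t) :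
    flipSign r ω = (ω.1, Function.update ω.2 r (!ω.2 r)) := rfl

lemma signedCollision_flipSign {n t : ℕ} (r : Fin n) (ω : SEOutcome n t) (p : Fin n × Fin n) :
    signedCollision (flipSign r ω) p =
      (if r = p.1 ∨ r = p.2 then -1 else 1) * signedCollision ω p := by
  obtain ⟨i, j⟩ := p
  by_cases hij : i = j
  · simp [signedCollision, hij]
  by_cases hi : r = i
  · subst hi
    simp [signedCollision, flipSign_apply, Function.update_of_ne (Ne.symm hij), sgn_not]
  by_cases hj : r = j
  · subst hj
    simp [signedCollision, flipSign_apply, Function.update_of_ne hij, sgn_not]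
  · simp [signedCollision, flipSign_apply, Function.update_of_ne (Ne.symm hi),
      Function.update_of_ne (Ne.symm hj), hi, hj]

lemma sum_eq_zero_of_flipSign {n t : ℕ} (r : Fin n) (f : SEOutcome n t → ℝ)
    (hf : ∀ ω, f (flipSign r ω) = - f ω) : ∑ ω, f ω = 0 := by
  have h := Equiv.sum_comp (flipSign r) f
  simp only [hf, Finset.sum_neg_distrib] at h
  linarith

lemma sum_signedCollision {n t : ℕ} (p : Fin n × Fin n) :
    ∑ ω : SEOutcome n t, signedCollision ω p = 0 :=
  sum_eq_zero_of_flipSign p.1 _ fun ω => by simp [signedCollision_flipSign]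

/-- Two fixed distinct indices collide with probability `1 / t`. -/
lemma mul_sum_collision {n t : ℕ} {i j : Fin n} (hij : i ≠ j) :
    (t : ℝ) * ∑ h : Fin n → Fin t, (if h i = h j then (1 : ℝ) else 0) =
      Fintype.card (Fin n → Fin t) := by
  -- Separate the value at `i` from the others: given the others, exactly one value collides.
  have e := Equiv.sum_comp (Equiv.funSplitAt i (Fin t)).symm
    (fun h : Fin n → Fin t => if h i = h j then (1 : ℝ) else 0)
  rw [← e, Fintype.card_congr (Equiv.funSplitAt i (Fin t)), Fintype.sum_prod_type_right]
  simp [Equiv.funSplitAt, Equiv.piSplitAt, Ne.symm hij]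

lemma mul_sum_signedCollision_sq {n t : ℕ} {p : Fin n × Fin n} (hp : p.1 ≠ p.2) :
    (t : ℝ) * ∑ ω : SEOutcome n t, signedCollision ω p * signedCollision ω p =
      Fintype.card (SEOutcome n t) := by
  have : ∀ ω : SEOutcome n t, signedCollision ω p * signedCollision ω p =
      if ω.1 p.1 = ω.1 p.2 then (1 : ℝ) else 0 := by
    intro ω
    by_cases h : ω.1 p.1 = ω.1 p.2
    · have h1 := sgn_mul_self (ω.2 p.1)
      have h2 := sgn_mul_self (ω.2 p.2)
      simp only [signedCollision, hp, h, ne_eq, not_false_eq_true, and_self, if_true]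
      linear_combination h1 * (sgn (ω.2 p.2) * sgn (ω.2 p.2)) + h2
    · simp [signedCollision, h]
  have fiber : ∑ ω : SEOutcome n t, (if ω.1 p.1 = ω.1 p.2 then (1 : ℝ) else 0) =
      ∑ _σ : Fin n → Bool, ∑ h : Fin n → Fin t, (if h p.1 = h p.2 then (1 : ℝ) else 0) :=
    Fintype.sum_prod_type_right _
  simp_rw [this]
  rw [fiber, Finset.sum_const, nsmul_eq_mul, mul_left_comm,
    mul_sum_collision hp, Fintype.card_prod, Finset.card_univ]
  push_cast
  ring

/-- The signed collision indicators of distinct unordered pairs are orthogonal, because some index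
occurs in just one of the two pairs. -/
lemma mul_sum_signedCollision_mul {n t : ℕ} (p q : Fin n × Fin n) :
    (t : ℝ) * ∑ ω : SEOutcome n t, signedCollision ω p * signedCollision ω q =
      Fintype.card (SEOutcome n t) *
        if p.1 ≠ p.2 then ((if q = p then 1 else 0) + if q = p.swap then 1 else 0) else 0 := by
  by_cases hp : p.1 = p.2
  · simp [signedCollision, hp]
  have hps : p ≠ p.swap := fun h => hp (congrArg Prod.fst h)
  by_cases h1 : q = p
  · subst h1
    simp [mul_sum_signedCollision_sq hp, hp, hps]
  by_cases h2 : q = p.swap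
  · subst h2
    have : ∀ ω : SEOutcome n t, signedCollision ω p.swap = signedCollision ω p := by
      intro ω
      simp only [signedCollision, Prod.fst_swap, Prod.snd_swap, ne_eq, eq_comm (a := p.2),
        eq_comm (a := ω.1 p.2), mul_comm (sgn (ω.2 p.2))]
    simp [this, mul_sum_signedCollision_sq hp, hp, Ne.symm hps]
  have hr : ∃ r, (r = p.1 ∨ r = p.2) ∧ ¬ (r = q.1 ∨ r = q.2) := by
    by_contra! hcon
    have a := hcon p.1 (Or.inl rfl)
    have b := hcon p.2 (Or.inr rfl)
    rw [Prod.ext_iff] at h1 h2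
    simp only [Prod.fst_swap, Prod.snd_swap] at h2
    grind
  obtain ⟨r, hrp, hrq⟩ := hr
  rw [sum_eq_zero_of_flipSign r _ fun ω => by
    rw [signedCollision_flipSign, signedCollision_flipSign, if_pos hrp, if_neg hrq]; ring]
  simp [h1, h2]

lemma rowGram_sq_le {n d : ℕ} (A : Matrix (Fin n) (Fin d) ℝ) (p : Fin n × Fin n) :
    rowGram A p ^ 2 ≤ rowGram A (p.1, p.1) * rowGram A (p.2, p.2) := by
  have := Finset.sum_mul_sq_le_sq_mul_sq Finset.univ (A p.1) (A p.2)
  simpa [rowGram, sq] using this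

/-- The variance bound, with the constant `2`. -/
lemma mul_sum_sq_deviation_le {n d t : ℕ} (A : Matrix (Fin n) (Fin d) ℝ) :
    (t : ℝ) * ∑ ω : SEOutcome n t, (frobSq (SE ω.1 ω.2 * A) - frobSq A) ^ 2 ≤
      Fintype.card (SEOutcome n t) * (2 * frobSq A ^ 2) := by
  have expand : (t : ℝ) * ∑ ω : SEOutcome n t, (frobSq (SE ω.1 ω.2 * A) - frobSq A) ^ 2 =
      ∑ p, ∑ q, rowGram A p * rowGram A q *
        ((t : ℝ) * ∑ ω : SEOutcome n t, signedCollision ω p * signedCollision ω q) := by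
    simp_rw [frobSq_SE_mul_sub, sq, Finset.sum_mul_sum, Finset.mul_sum]
    rw [Finset.sum_comm]
    refine Finset.sum_congr rfl fun p _ => ?_
    rw [Finset.sum_comm]
    refine Finset.sum_congr rfl fun q _ => Finset.sum_congr rfl fun ω _ => ?_
    ring
  have swap : ∀ p, rowGram A p.swap = rowGram A p := fun p => by simp [rowGram, mul_comm]
  have inner : ∀ p, ∑ q, rowGram A p * rowGram A q *
        ((t : ℝ) * ∑ ω : SEOutcome n t, signedCollision ω p * signedCollision ω q) ≤
      Fintype.card (SEOutcome n t) *
        (2 * (rowGram A (p.1, p.1) * rowGram A (p.2, p.2))) := by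
    intro p
    have hG := rowGram_sq_le A p
    simp_rw [mul_sum_signedCollision_mul]
    by_cases hp : p.1 = p.2
    · simp only [hp, ne_eq, not_true_eq_false, if_false, mul_zero, Finset.sum_const_zero]
      have := mul_self_nonneg (rowGram A (p.2, p.2))
      positivity
    · have : ∑ q, rowGram A p * rowGram A q * (Fintype.card (SEOutcome n t) *
          if p.1 ≠ p.2 then ((if q = p then (1 : ℝ) else 0) + if q = p.swap then 1 else 0) else 0)
          = Fintype.card (SEOutcome n t) * (2 * rowGram A p ^ 2) := by
        simp only [hp, ne_eq, not_false_eq_true, if_true, mul_add, mul_ite, mul_one, mul_zero,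
          Finset.sum_add_distrib, Finset.sum_ite_eq', Finset.mem_univ, swap]
        ring
      rw [this]
      gcongr
  rw [expand]
  refine (Finset.sum_le_sum fun p _ => inner p).trans_eq ?_
  rw [← Finset.mul_sum, ← Finset.mul_sum, frobSq_eq_sum_rowGram, sq, Finset.sum_mul_sum,
    Fintype.sum_prod_type]

/-- Chebyshev's inequality for a finite uniform space, in counting form. If the
scale `F` vanishes then so does the second moment, and every outcome is good. -/
lemma chebyshev_count {Ω : Type*} [Fintype Ω] (X : Ω → ℝ) {F ε : ℝ} (hF : 0 ≤ F) (hε : 0 < ε)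
    (h : ∑ ω, X ω ^ 2 ≤ Fintype.card Ω * (ε ^ 2 / 10 * F ^ 2)) :
    (9 : ℝ) / 10 * Fintype.card Ω ≤ Nat.card {ω // |X ω| ≤ ε * F} := by
  classical
  rw [Nat.card_eq_fintype_card, Fintype.card_subtype]
  rcases hF.eq_or_lt with rfl | hF
  · have h0 : ∑ ω, X ω ^ 2 = 0 :=
      le_antisymm (by simpa using h) (Finset.sum_nonneg fun _ _ => sq_nonneg _)
    have hX : ∀ ω, X ω = 0 := fun ω => by
      simpa using (Finset.sum_eq_zero_iff_of_nonneg fun _ _ => sq_nonneg _).1 h0 ω (Finset.mem_univ ω)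
    simp only [hX, abs_zero, mul_zero, le_refl, Finset.filter_true, Finset.card_univ]
    linarith [Nat.cast_nonneg (α := ℝ) (Fintype.card Ω)]
  have hcard : ((#{ω | |X ω| ≤ ε * F} : ℕ) : ℝ) + (#{ω | ¬ |X ω| ≤ ε * F} : ℕ) =
      Fintype.card Ω := by
    exact_mod_cast Finset.card_filter_add_card_filter_not (s := Finset.univ) (fun ω => |X ω| ≤ ε * F)
  have hbad : ((#{ω | ¬ |X ω| ≤ ε * F} : ℕ) : ℝ) * (ε * F) ^ 2 ≤ ∑ ω, X ω ^ 2 := by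
    rw [← nsmul_eq_mul]
    refine (Finset.card_nsmul_le_sum _ (fun ω => X ω ^ 2) _ fun ω hω => ?_).trans
      (Finset.sum_le_sum_of_subset_of_nonneg (Finset.filter_subset _ _)
        fun _ _ _ => sq_nonneg _)
    rw [← sq_abs (X ω)]
    have := (Finset.mem_filter.1 hω).2
    push Not at this
    gcongr
  have hpos : 0 < (ε * F) ^ 2 := by positivity
  have : ((#{ω | ¬ |X ω| ≤ ε * F} : ℕ) : ℝ) ≤ Fintype.card Ω / 10 := by
    refine le_of_mul_le_mul_right ((hbad.trans h).trans_eq ?_) hpos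
    ring
  linarith

/-- **Sparse embeddings preserve the Frobenius norm of a fixed matrix.**
For a random sparse embedding `S`, `E[‖SA‖_F²] = ‖A‖_F²` and
`Var[‖SA‖_F²] ≤ (6/t)·‖A‖_F⁴` (expectation and variance over the uniform finite
probability space of `(h, σ)`, expressed here by multiplying through by the number
of outcomes); consequently there is an absolute constant `c > 0` such that if
`t ≥ c·ε⁻²` then with probability at least `9/10`, `‖SA‖_F² = (1 ± ε)·‖A‖_F²`. -/
theorem sparse_embedding_preserves_frobenius :
    ∃ c : ℝ, 0 < c ∧
    ∀ (n d t : ℕ), 0 < t →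
    ∀ A : Matrix (Fin n) (Fin d) ℝ,
      (∑ ω : (Fin n → Fin t) × (Fin n → Bool), frobSq (SE ω.1 ω.2 * A)) =
        (Fintype.card ((Fin n → Fin t) × (Fin n → Bool))) * frobSq A ∧
      (∑ ω : (Fin n → Fin t) × (Fin n → Bool),
          (frobSq (SE ω.1 ω.2 * A) - frobSq A) ^ 2) ≤
        (Fintype.card ((Fin n → Fin t) × (Fin n → Bool))) * (6 / t) * frobSq A ^ 2 ∧
      ∀ ε : ℝ, 0 < ε → ε < 1 → c / ε ^ 2 ≤ t →
        (9 : ℝ) / 10 * (Fintype.card ((Fin n → Fin t) × (Fin n → Bool))) ≤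
          Nat.card {ω : (Fin n → Fin t) × (Fin n → Bool) //
            |frobSq (SE ω.1 ω.2 * A) - frobSq A| ≤ ε * frobSq A} := by
  refine ⟨60, by norm_num, fun n d t ht A => ?_⟩
  have ht' : (0 : ℝ) < t := by exact_mod_cast ht
  have hF : 0 ≤ frobSq A :=
    Finset.sum_nonneg fun _ _ => Finset.sum_nonneg fun _ _ => sq_nonneg _
  have hvar : (∑ ω : (Fin n → Fin t) × (Fin n → Bool),
      (frobSq (SE ω.1 ω.2 * A) - frobSq A) ^ 2) ≤
      (Fintype.card ((Fin n → Fin t) × (Fin n → Bool))) * (6 / t) * frobSq A ^ 2 := by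
    refine le_of_mul_le_mul_left ((mul_sum_sq_deviation_le A).trans ?_) ht'
    have : (t : ℝ) * (Fintype.card (SEOutcome n t) * (6 / t) * frobSq A ^ 2) =
        Fintype.card (SEOutcome n t) * (6 * frobSq A ^ 2) := by
      field_simp
    rw [this]
    gcongr
    norm_num
  refine ⟨?_, hvar, fun ε hε _ hc => ?_⟩
  · rw [← sub_eq_zero, ← nsmul_eq_mul, ← Finset.card_univ, ← Finset.sum_const,
      ← Finset.sum_sub_distrib]
    simp_rw [frobSq_SE_mul_sub]
    rw [Finset.sum_comm]
    refine Finset.sum_eq_zero fun p _ => ?_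
    rw [← Finset.sum_mul, sum_signedCollision, zero_mul]
  · refine chebyshev_count
      (fun ω : SEOutcome n t => frobSq (SE ω.1 ω.2 * A) - frobSq A) hF hε (hvar.trans ?_)
    rw [mul_assoc]
    have : 6 / (t : ℝ) ≤ ε ^ 2 / 10 := by
      rw [div_le_iff₀ (by positivity)] at hc
      rw [div_le_div_iff₀ ht' (by norm_num)]
      linarith
    gcongr
end
end
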